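/- Let k ≥ 0 and let g : ℂ × ℂ × ℝ^k → ℝ be smooth (C^∞). For ε ∈ ℝ define φ_ε(z₀, z₁, x) = g(z₀, z₁, x) − log|z₀z₁ + ε|² on the open set where z₀z₁ + ε ≠ 0. Fix x₀ ∈ ℝ^k, set p = (0, 0, x₀), and assume: (i) the Fréchet derivative of x ↦ g(0, 0, x) vanishes at x₀, and (ii) the Hessian of x ↦ g(0, 0, x) at x₀ is nondegenerate; let m denote the maximal dimension of a subspace of ℝ^k on which the quadratic form of this Hessian is negative definite. Then there exist ε₁ > 0 and an open neighborhood U of p such that for every 0 < ε < ε₁, φ_ε has a unique critical point p_ε in U, the second derivative of φ_ε at p_ε is a nondegenerate bilinear form on ℂ × ℂ × ℝ^k ≅ ℝ^{4+k}, and the maximal dimension of a subspace on which the quadratic form v ↦ D²φ_ε(p_ε)(v, v) is negative definite equals m + 2. -/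

import Mathlib

open Filter Topology

/-- The set of dimensions of subspaces of `V` on which the quadratic form of the bilinear
form `B` is negative definite.  Its greatest element is the Morse index of `B`. -/
def negDefiniteDims (V : Type*) [NormedAddCommGroup V] [NormedSpace ℝ V]
    (B : V →L[ℝ] V →L[ℝ] ℝ) : Set ℕ :=
  {d | ∃ W : Submodule ℝ V, Module.finrank ℝ W = d ∧ ∀ v ∈ W, v ≠ 0 → B v v < 0}

/-- A bounded bilinear form that is positive definite on a finite-dimensional subspace is coercive
there. -/
lemma exists_coercive_of_posDefiniteOn {V : Type*} [NormedAddCommGroup V] [NormedSpace ℝ V]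
    [FiniteDimensional ℝ V] (B : V →L[ℝ] V →L[ℝ] ℝ) (P : Submodule ℝ V)
    (hP : ∀ v ∈ P, v ≠ 0 → 0 < B v v) :
    ∃ c > 0, ∀ v ∈ P, c * ‖v‖ ^ 2 ≤ B v v := by
  rcases (Metric.sphere (0 : P) 1).eq_empty_or_nonempty with he | hne
  · refine ⟨1, one_pos, fun v hv => ?_⟩
    have hv0 : v = 0 := by
      by_contra h
      have hmem : ‖v‖⁻¹ • (⟨v, hv⟩ : P) ∈ Metric.sphere (0 : P) 1 := by
        simp [norm_smul, h]
      simp [he] at hmem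
    simp [hv0]
  · obtain ⟨u, hu, hmin⟩ := (isCompact_sphere (0 : P) 1).exists_isMinOn hne
      (f := fun v : P => B v v) (by fun_prop)
    have hu1 : ‖u‖ = 1 := by simpa using hu
    have hu0 : (u : V) ≠ 0 := fun h => by simp [Submodule.coe_eq_zero.1 h] at hu1
    refine ⟨B u u, hP u u.2 hu0, fun v hv => ?_⟩
    rcases eq_or_ne v 0 with rfl | h
    · simp
    have hmem : ‖v‖⁻¹ • (⟨v, hv⟩ : P) ∈ Metric.sphere (0 : P) 1 := by
      simp [norm_smul, h]
    have hle : B u u ≤ B (‖v‖⁻¹ • v) (‖v‖⁻¹ • v) := hmin hmem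
    have hv : 0 < ‖v‖ := norm_pos_iff.2 h
    simp only [map_smul, smul_apply, smul_eq_mul] at hle
    calc B u u * ‖v‖ ^ 2 ≤ ‖v‖⁻¹ * (‖v‖⁻¹ * B v v) * ‖v‖ ^ 2 := by gcongr
      _ = B v v := by field_simp

/-- A subspace of maximal dimension on which a nondegenerate symmetric form is negative definite
has a complement on which the form is positive definite. -/
lemma exists_posDefinite_complement {V : Type*} [NormedAddCommGroup V] [NormedSpace ℝ V]
    [FiniteDimensional ℝ V] (B : V →L[ℝ] V →L[ℝ] ℝ) (hsymm : ∀ v w, B v w = B w v)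
    (hnd : ∀ v, v ≠ 0 → B v ≠ 0) {m : ℕ} (hm : IsGreatest (negDefiniteDims V B) m) :
    ∃ N P : Submodule ℝ V, Module.finrank ℝ N = m ∧
      Module.finrank ℝ N + Module.finrank ℝ P = Module.finrank ℝ V ∧
      (∀ v ∈ N, v ≠ 0 → B v v < 0) ∧ (∀ v ∈ P, v ≠ 0 → 0 < B v v) := by
  obtain ⟨⟨N, hNm, hN⟩, hmax⟩ := hm
  let β : LinearMap.BilinForm ℝ V := LinearMap.mk₂ ℝ (fun v w => B v w)
    (by simp) (by simp) (by simp) (by simp)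
  have hβ : β.IsRefl := fun v w h => by simpa [β, hsymm w v] using h
  have hP : ∀ v, v ∈ β.orthogonal N ↔ ∀ n ∈ N, B n v = 0 := fun v => Iff.rfl
  have hdisj : Disjoint N (β.orthogonal N) := by
    rw [Submodule.disjoint_def]
    intro v hvN hvP
    by_contra h
    exact (hN v hvN h).ne ((hP v).1 hvP v hvN)
  have hcompl := (LinearMap.BilinForm.isCompl_orthogonal_iff_disjoint hβ).2 hdisj
  have hnonneg : ∀ v ∈ β.orthogonal N, 0 ≤ B v v := by
    intro v hv
    by_contra! hneg
    have hv0 : v ≠ 0 := by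
      rintro rfl
      simp at hneg
    have hdisj' : Disjoint N (Submodule.span ℝ {v}) :=
      hdisj.mono_right ((Submodule.span_singleton_le_iff_mem _ _).2 hv)
    have hdim : Module.finrank ℝ (N ⊔ Submodule.span ℝ {v} : Submodule ℝ V) = m + 1 := by
      have := Submodule.finrank_sup_add_finrank_inf_eq N (Submodule.span ℝ {v})
      rw [hdisj'.eq_bot, finrank_span_singleton hv0, hNm] at this
      simpa using this
    have hmem : m + 1 ∈ negDefiniteDims V B := by
      refine ⟨_, hdim, fun w hw hw0 => ?_⟩
      obtain ⟨n, hn, s, hs, rfl⟩ := Submodule.mem_sup.1 hw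
      obtain ⟨t, rfl⟩ := Submodule.mem_span_singleton.1 hs
      have h1 : B n v = 0 := (hP v).1 hv n hn
      have h2 : B v n = 0 := by rw [hsymm, h1]
      have hexp : B (n + t • v) (n + t • v) = B n n + t ^ 2 * B v v := by
        simp [h1, h2]
        ring
      rw [hexp]
      rcases eq_or_ne n 0 with rfl | hn0
      · have ht : t ≠ 0 := by
          rintro rfl
          simp at hw0
        have : 0 < t ^ 2 := by positivity
        simp only [map_zero, zero_add]
        nlinarith
      · nlinarith [hN n hn hn0, sq_nonneg t]
    have := hmax hmem
    omega
  refine ⟨N, β.orthogonal N, hNm, Submodule.finrank_add_eq_of_isCompl hcompl, hN,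
    fun v hv hv0 => (hnonneg v hv).lt_of_ne' fun hzero => hnd v hv0 ?_⟩
  have horth : ∀ u ∈ β.orthogonal N, B v u = 0 := by
    intro u hu
    by_contra h
    obtain ⟨t, ht⟩ : ∃ t : ℝ, t * B v u = -(B u u + 1) / 2 := ⟨_, div_mul_cancel₀ _ h⟩
    have hpos := hnonneg _ (add_mem hu (Submodule.smul_mem _ t hv))
    simp only [map_add, map_smul, add_apply, smul_apply, smul_eq_mul, hsymm u v, hzero] at hpos
    linarith
  ext w
  obtain ⟨n, hn, u, hu, rfl⟩ := Submodule.mem_sup.1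
    (hcompl.sup_eq_top ▸ Submodule.mem_top : w ∈ N ⊔ β.orthogonal N)
  simp [horth u hu, hsymm v n, (hP v).1 hv n hn]

/-- A symmetric form which is negative and positive definite on subspaces of complementary
dimensions is nondegenerate, and its Morse index is the dimension of the former. -/
lemma nondegenerate_and_isGreatest_negDefiniteDims {V : Type*} [NormedAddCommGroup V]
    [NormedSpace ℝ V] [FiniteDimensional ℝ V] (B : V →L[ℝ] V →L[ℝ] ℝ)
    (hsymm : ∀ v w, B v w = B w v) (N P : Submodule ℝ V)
    (hdim : Module.finrank ℝ N + Module.finrank ℝ P = Module.finrank ℝ V)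
    (hN : ∀ v ∈ N, v ≠ 0 → B v v < 0) (hP : ∀ v ∈ P, v ≠ 0 → 0 < B v v) :
    (∀ v, v ≠ 0 → B v ≠ 0) ∧ IsGreatest (negDefiniteDims V B) (Module.finrank ℝ N) := by
  have hdisj : ∀ W : Submodule ℝ V, (∀ v ∈ W, v ≠ 0 → B v v < 0) → Disjoint W P := by
    intro W hW
    rw [Submodule.disjoint_def]
    intro v hvW hvP
    by_contra h
    exact lt_asymm (hW v hvW h) (hP v hvP h)
  refine ⟨fun v hv0 hv => ?_, ⟨N, rfl, hN⟩, ?_⟩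
  · have htop : N ⊔ P = ⊤ := Submodule.eq_top_of_disjoint N P hdim.ge (hdisj N hN)
    obtain ⟨n, hn, p, hp, rfl⟩ := Submodule.mem_sup.1
      (htop ▸ Submodule.mem_top : v ∈ N ⊔ P)
    have h : B (n + p) (n - p) = B n n - B p p := by
      simp [hsymm p n]
    rw [hv] at h
    simp only [zero_apply] at h
    have hn0 : n = 0 := by
      by_contra hne
      have h1 := hN n hn hne
      rcases eq_or_ne p 0 with rfl | hp0
      · simp at h
        linarith
      · linarith [hP p hp hp0]
    have hp0 : p = 0 := by
      by_contra hne
      have h1 := hP p hp hne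
      simp [hn0] at h
      linarith
    simp [hn0, hp0] at hv0
  · rintro d ⟨W, rfl, hW⟩
    have := Submodule.finrank_add_finrank_le_of_disjoint (hdisj W hW)
    omega

/-- Definiteness on a subspace is stable under perturbation of the form, with uniform coercivity
constants. -/
lemma eventually_coercive_of_definiteOn {V Y : Type*} [NormedAddCommGroup V]
    [NormedSpace ℝ V] [FiniteDimensional ℝ V] {l : Filter Y} {B : Y → V →L[ℝ] V →L[ℝ] ℝ}
    {B₀ : V →L[ℝ] V →L[ℝ] ℝ} (hB : Tendsto (fun q => ‖B q - B₀‖) l (𝓝 0)) {N P : Submodule ℝ V}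
    (hN : ∀ v ∈ N, v ≠ 0 → B₀ v v < 0) (hP : ∀ v ∈ P, v ≠ 0 → 0 < B₀ v v) :
    ∃ c > 0, ∀ᶠ q in l, (∀ v ∈ N, c * ‖v‖ ^ 2 ≤ -B q v v) ∧
      ∀ v ∈ P, c * ‖v‖ ^ 2 ≤ B q v v := by
  obtain ⟨c₁, hc₁, h₁⟩ := exists_coercive_of_posDefiniteOn (-B₀) N
    (fun v hv hv0 => neg_pos.2 (hN v hv hv0))
  obtain ⟨c₂, hc₂, h₂⟩ := exists_coercive_of_posDefiniteOn B₀ P hP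
  have hc : 0 < min c₁ c₂ / 2 := by positivity
  refine ⟨min c₁ c₂ / 2, hc, ?_⟩
  filter_upwards [hB.eventually_lt_const hc] with q hq
  have hclose : ∀ v, |B q v v - B₀ v v| ≤ min c₁ c₂ / 2 * ‖v‖ ^ 2 := fun v => by
    have h := (B q - B₀).le_opNorm₂ v v
    rw [sub_apply, sub_apply, Real.norm_eq_abs] at h
    nlinarith [sq_nonneg ‖v‖]
  refine ⟨fun v hv => ?_, fun v hv => ?_⟩
  · have h := h₁ v hv
    rw [neg_apply, neg_apply] at h
    linarith [(abs_le.1 (hclose v)).2,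
      mul_le_mul_of_nonneg_right (min_le_left c₁ c₂) (sq_nonneg ‖v‖)]
  · linarith [(abs_le.1 (hclose v)).1, h₂ v hv,
      mul_le_mul_of_nonneg_right (min_le_right c₁ c₂) (sq_nonneg ‖v‖)]

lemma tendsto_norm_fderiv_comp_sub {E F Z : Type*} [NormedAddCommGroup E] [NormedSpace ℝ E]
    [NormedAddCommGroup F] [NormedSpace ℝ F] [NormedAddCommGroup Z] [NormedSpace ℝ Z] {f : E → F}
    (hf : ContDiff ℝ 1 f) (J : Z →L[ℝ] E) (p : E) :
    Tendsto (fun q => ‖(fderiv ℝ f q).comp J - (fderiv ℝ f p).comp J‖) (𝓝 p) (𝓝 0) :=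
  tendsto_iff_norm_sub_tendsto_zero.1
    (((hf.continuous_fderiv one_ne_zero).clm_comp continuous_const).tendsto p)

lemma eventually_norm_fderiv_lt {E F : Type*} [NormedAddCommGroup E] [NormedSpace ℝ E]
    [NormedAddCommGroup F] [NormedSpace ℝ F] {f : E → F} (hf : ContDiff ℝ 1 f) (p : E) :
    ∀ᶠ q in 𝓝 p, ‖fderiv ℝ f q‖ < ‖fderiv ℝ f p‖ + 1 :=
  (((hf.continuous_fderiv one_ne_zero).tendsto p).norm).eventually_lt_const (lt_add_one _)

/-- The subspace of `ℂ × ℂ × X` of all `(z, u * conj z, ξ)` with `ξ ∈ P`. -/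
noncomputable def conjGraph {X : Type*} [NormedAddCommGroup X] [NormedSpace ℝ X] (u : ℂ)
    (P : Submodule ℝ X) : Submodule ℝ (ℂ × ℂ × X) where
  carrier := {v | v.2.1 = u * (starRingEnd ℂ) v.1 ∧ v.2.2 ∈ P}
  zero_mem' := by simp
  add_mem' := by
    rintro v w ⟨h1, h2⟩ ⟨h3, h4⟩
    exact ⟨by simp [h1, h3, mul_add], add_mem h2 h4⟩
  smul_mem' := by
    rintro t v ⟨h1, h2⟩
    exact ⟨by simp [h1, mul_left_comm], P.smul_mem t h2⟩

lemma mem_conjGraph {X : Type*} [NormedAddCommGroup X] [NormedSpace ℝ X] {u : ℂ}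
    {P : Submodule ℝ X} {v : ℂ × ℂ × X} :
    v ∈ conjGraph u P ↔ v.2.1 = u * (starRingEnd ℂ) v.1 ∧ v.2.2 ∈ P :=
  Iff.rfl

lemma finrank_conjGraph {X : Type*} [NormedAddCommGroup X] [NormedSpace ℝ X]
    [FiniteDimensional ℝ X] (u : ℂ) (P : Submodule ℝ X) :
    Module.finrank ℝ (conjGraph u P) = Module.finrank ℝ P + 2 := by
  let e : conjGraph u P ≃ₗ[ℝ] ℂ × P :=
    { toFun := fun v => (v.1.1, ⟨v.1.2.2, v.2.2⟩)
      invFun := fun y => ⟨(y.1, u * (starRingEnd ℂ) y.1, y.2), by simp [mem_conjGraph]⟩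
      map_add' := fun _ _ => rfl
      map_smul' := fun _ _ => rfl
      left_inv := fun v => Subtype.ext (Prod.ext rfl (Prod.ext v.2.1.symm rfl))
      right_inv := fun _ => rfl }
  rw [e.finrank_eq, Module.finrank_prod, Complex.finrank_real_complex, add_comm]

/-- Adding a large multiple of `‖z‖ ^ 2` to a form which is coercive in the `ξ`-direction makes it
positive at vectors `(z, z', ξ)` with `‖z'‖ = ‖z‖`. -/
lemma pos_add_mul_norm_sq {X : Type*} [NormedAddCommGroup X] [NormedSpace ℝ X]
    (H : (ℂ × ℂ × X) →L[ℝ] (ℂ × ℂ × X) →L[ℝ] ℝ) {C c K : ℝ} (hC : ‖H‖ ≤ C) (hc : 0 < c)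
    (hK : C ^ 2 < c * (K - C)) {v : ℂ × ℂ × X} (hv : v ≠ 0) (hnorm : ‖v.2.1‖ = ‖v.1‖)
    (hcoer : c * ‖v.2.2‖ ^ 2 ≤ H (0, 0, v.2.2) (0, 0, v.2.2)) :
    0 < K * ‖v.1‖ ^ 2 + H v v := by
  obtain ⟨z, z', ξ⟩ := v
  simp only at hnorm hcoer ⊢
  have hz : ‖((z, z', 0) : ℂ × ℂ × X)‖ = ‖z‖ := by simp [Prod.norm_def, hnorm]
  have hξ : ‖((0, 0, ξ) : ℂ × ℂ × X)‖ = ‖ξ‖ := by simp [Prod.norm_def]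
  have hbound : ∀ x y, -(C * ‖x‖ * ‖y‖) ≤ H x y := fun x y => by
    have h1 : |H x y| ≤ ‖H‖ * ‖x‖ * ‖y‖ := H.le_opNorm₂ x y
    have h2 : ‖H‖ * ‖x‖ * ‖y‖ ≤ C * ‖x‖ * ‖y‖ := by gcongr
    linarith [neg_abs_le (H x y)]
  have hsplit : ((z, z', ξ) : ℂ × ℂ × X) = (z, z', 0) + (0, 0, ξ) := by simp
  have hexp : H (z, z', ξ) (z, z', ξ) = H (z, z', 0) (z, z', 0) + H (z, z', 0) (0, 0, ξ)
      + H (0, 0, ξ) (z, z', 0) + H (0, 0, ξ) (0, 0, ξ) := by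
    rw [hsplit]
    simp only [map_add, add_apply]
    ring
  have h1 := hbound (z, z', 0) (z, z', 0)
  have h2 := hbound (z, z', 0) (0, 0, ξ)
  have h3 := hbound (0, 0, ξ) (z, z', 0)
  rw [hz] at h1
  rw [hz, hξ] at h2 h3
  rw [hexp]
  suffices h : 0 < (K - C) * ‖z‖ ^ 2 - 2 * C * ‖z‖ * ‖ξ‖ + c * ‖ξ‖ ^ 2 by nlinarith
  refine pos_of_mul_pos_right (a := c) ?_ hc.le
  have hsq : c * ((K - C) * ‖z‖ ^ 2 - 2 * C * ‖z‖ * ‖ξ‖ + c * ‖ξ‖ ^ 2)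
      = (c * (K - C) - C ^ 2) * ‖z‖ ^ 2 + (c * ‖ξ‖ - C * ‖z‖) ^ 2 := by ring
  rw [hsq]
  rcases eq_or_ne z 0 with rfl | hz0
  · have hz' : z' = 0 := by simpa using hnorm
    have hξ0 : ξ ≠ 0 := by
      rintro rfl
      simp [hz'] at hv
    have : 0 < c * ‖ξ‖ := mul_pos hc (norm_pos_iff.2 hξ0)
    simpa using pow_pos this 2
  · have : 0 < ‖z‖ := norm_pos_iff.2 hz0
    have : 0 < (c * (K - C) - C ^ 2) * ‖z‖ ^ 2 := mul_pos (by linarith) (by positivity)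
    positivity

/-- The zeros near `(0, 0, x₀)` of the system `z₁ = a w`, `z₀ = b w`, `G = 0`, where
`w = z₀ z₁ + ε`, form a curve parametrized by `ε`. -/
lemma exists_implicit_zero {X Y : Type*} [NormedAddCommGroup X] [NormedSpace ℝ X]
    [FiniteDimensional ℝ X] [NormedAddCommGroup Y] [NormedSpace ℝ Y] [FiniteDimensional ℝ Y]
    (hXY : Module.finrank ℝ X = Module.finrank ℝ Y)
    {a b : ℂ × ℂ × X → ℂ} {G : ℂ × ℂ × X → Y} (ha : ContDiff ℝ 1 a) (hb : ContDiff ℝ 1 b)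
    (hG : ContDiff ℝ 1 G) {x₀ : X} (hG0 : G (0, 0, x₀) = 0)
    (hGnd : ∀ x, x ≠ 0 → fderiv ℝ G (0, 0, x₀) (0, 0, x) ≠ 0) :
    ∃ U : Set (ℂ × ℂ × X), IsOpen U ∧ (0, 0, x₀) ∈ U ∧ ∃ ψ : ℝ → ℂ × ℂ × X,
      Tendsto ψ (𝓝 0) (𝓝 (0, 0, x₀)) ∧ ∀ᶠ ε : ℝ in 𝓝 0, ψ ε ∈ U ∧ ∀ q ∈ U,
        (q.2.1 = a q * (q.1 * q.2.1 + (ε : ℂ)) ∧ q.1 = b q * (q.1 * q.2.1 + (ε : ℂ)) ∧ G q = 0) ↔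
          q = ψ ε := by
  have : CompleteSpace X := FiniteDimensional.complete ℝ X
  have : CompleteSpace Y := FiniteDimensional.complete ℝ Y
  let p : ℂ × ℂ × X := (0, 0, x₀)
  let F : ℝ × (ℂ × ℂ × X) → ℂ × ℂ × Y := fun y =>
    (y.2.2.1 - a y.2 * (y.2.1 * y.2.2.1 + (y.1 : ℂ)),
      y.2.1 - b y.2 * (y.2.1 * y.2.2.1 + (y.1 : ℂ)), G y.2)
  have hcast : ContDiff ℝ 1 (fun y : ℝ × (ℂ × ℂ × X) => (y.1 : ℂ)) :=
    Complex.ofRealCLM.contDiff.comp contDiff_fst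
  have hF : ContDiff ℝ 1 F := by fun_prop
  have hF0 : F (0, p) = 0 := by simp [F, p, hG0]
  have hstrict : HasStrictFDerivAt F (fderiv ℝ F (0, p)) (0, p) :=
    hF.contDiffAt.hasStrictFDerivAt one_ne_zero
  have hpartial : HasFDerivAt (fun q => F (0, q))
      (fderiv ℝ F (0, p) ∘L .inr ℝ ℝ (ℂ × ℂ × X)) p :=
    hstrict.hasFDerivAt.comp p (hasFDerivAt_prodMk_right 0 p)
  have hw : HasFDerivAt (fun q : ℂ × ℂ × X => q.1 * q.2.1) (0 : (ℂ × ℂ × X) →L[ℝ] ℂ) p := by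
    have h := (hasFDerivAt_fst (𝕜 := ℝ) (p := p)).mul (hasFDerivAt_snd (𝕜 := ℝ) (p := p)).fst
    convert! h using 1
    ext <;> simp [p]
  have hmul : ∀ f : ℂ × ℂ × X → ℂ, ContDiff ℝ 1 f →
      HasFDerivAt (fun q => f q * (q.1 * q.2.1)) (0 : (ℂ × ℂ × X) →L[ℝ] ℂ) p := by
    intro f hf
    have h := ((hf.differentiable one_ne_zero) p).hasFDerivAt.mul hw
    convert! h using 1
    ext <;> simp [p]
  have hpartial' : HasFDerivAt (fun q => F (0, q))
      (((ContinuousLinearMap.fst ℝ ℂ X).comp (ContinuousLinearMap.snd ℝ ℂ (ℂ × X)) - 0).prod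
        ((ContinuousLinearMap.fst ℝ ℂ (ℂ × X) - 0).prod (fderiv ℝ G p))) p := by
    have h1 := (hasFDerivAt_snd (𝕜 := ℝ) (p := p)).fst.sub (hmul a ha)
    have h2 := (hasFDerivAt_fst (𝕜 := ℝ) (p := p)).sub (hmul b hb)
    have h3 := ((hG.differentiable one_ne_zero) p).hasFDerivAt
    convert! h1.prodMk (h2.prodMk h3) using 1
    ext q <;> simp [F]
  have heq := hpartial.unique hpartial'
  have hinj : Function.Injective
      (fderiv ℝ F (0, p) ∘L .inr ℝ ℝ (ℂ × ℂ × X) : (ℂ × ℂ × X) →ₗ[ℝ] ℂ × ℂ × Y) := by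
    rw [← LinearMap.ker_eq_bot, LinearMap.ker_eq_bot']
    rintro ⟨z, z', ξ⟩ h
    rw [heq] at h
    simp only [sub_zero, ContinuousLinearMap.coe_coe, ContinuousLinearMap.prod_apply,
      ContinuousLinearMap.comp_apply, ContinuousLinearMap.coe_fst', ContinuousLinearMap.coe_snd',
      Prod.mk_eq_zero] at h
    obtain ⟨rfl, rfl, h⟩ := h
    have : ξ = 0 := by
      by_contra hξ
      exact hGnd ξ hξ h
    simp [this]
  have hrank : Module.finrank ℝ (ℂ × ℂ × X) = Module.finrank ℝ (ℂ × ℂ × Y) := by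
    simp [Module.finrank_prod, hXY]
  have hinv : (fderiv ℝ F (0, p) ∘L .inr ℝ ℝ (ℂ × ℂ × X)).IsInvertible :=
    ⟨(LinearEquiv.ofInjectiveOfFinrankEq _ hinj hrank).toContinuousLinearEquiv, by ext <;> rfl⟩
  have hev := hstrict.eventually_apply_eq_iff_implicitFunctionOfProdDomain hinv
  have htend := hstrict.tendsto_implicitFunctionOfProdDomain hinv
  set ψ := hstrict.implicitFunctionOfProdDomain hinv
  rw [nhds_prod_eq] at hev
  obtain ⟨S, hS, T, hT, hST⟩ := eventually_prod_iff.1 hev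
  obtain ⟨U, hUT, hU, hpU⟩ := eventually_nhds_iff.1 hT
  refine ⟨U, hU, hpU, ψ, htend, ?_⟩
  filter_upwards [hS, htend.eventually (hU.mem_nhds hpU)] with ε hε hψ
  refine ⟨hψ, fun q hq => ?_⟩
  have h := hST hε (hUT q hq)
  rw [hF0] at h
  rw [eq_comm (a := q), ← h]
  simp [F, Prod.ext_iff, sub_eq_zero]

/-- The complex number `c` with `ℓ h = 2 * re (c * h)`. -/
noncomputable def wirtingerCoeff (ℓ : ℂ →L[ℝ] ℝ) : ℂ :=
  ((ℓ 1 : ℂ) - (ℓ Complex.I : ℂ) * Complex.I) / 2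

lemma apply_eq_two_mul_re_iff {ℓ : ℂ →L[ℝ] ℝ} {c : ℂ} :
    (∀ h, ℓ h = 2 * (c * h).re) ↔ c = wirtingerCoeff ℓ := by
  have hre : (wirtingerCoeff ℓ).re = ℓ 1 / 2 := by
    simp [wirtingerCoeff]
  have him : (wirtingerCoeff ℓ).im = -ℓ Complex.I / 2 := by
    simp [wirtingerCoeff]
  constructor
  · intro h
    have h1 := h 1
    have h2 := h Complex.I
    simp at h1 h2
    apply Complex.ext
    · rw [hre]
      linarith
    · rw [him]
      linarith
  · rintro rfl h
    have hdec : h = h.re • (1 : ℂ) + h.im • Complex.I := by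
      apply Complex.ext <;> simp
    have hℓ : ℓ h = h.re * ℓ 1 + h.im * ℓ Complex.I := by
      conv_lhs => rw [hdec]
      simp only [map_add, map_smul, smul_eq_mul]
    rw [hℓ, Complex.mul_re, hre, him]
    ring

lemma contDiff_wirtingerCoeff {E : Type*} [NormedAddCommGroup E] [NormedSpace ℝ E]
    {ℓ : E → ℂ →L[ℝ] ℝ} {n : WithTop ℕ∞} (hℓ : ContDiff ℝ n ℓ) :
    ContDiff ℝ n (fun q => wirtingerCoeff (ℓ q)) := by
  have h : ∀ z : ℂ, ContDiff ℝ n (fun q => (ℓ q z : ℂ)) := fun z =>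
    Complex.ofRealCLM.contDiff.comp (hℓ.clm_apply contDiff_const)
  exact ((h 1).sub ((h Complex.I).mul contDiff_const)).div_const 2

lemma hasFDerivAt_log_normSq {w : ℂ} (hw : w ≠ 0) :
    HasFDerivAt (fun z : ℂ => Real.log (Complex.normSq z))
      ((2 : ℝ) • Complex.reCLM.comp (ContinuousLinearMap.mul ℝ ℂ w⁻¹)) w := by
  have h := (hasStrictFDerivAt_norm_sq w).hasFDerivAt.log (by simpa using hw)
  simp only [← Complex.normSq_eq_norm_sq] at h
  convert! h using 1
  ext
  all_goals
    simp [Complex.inv_re, Complex.inv_im, Complex.inner]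
    ring

section LogPotential

variable {X : Type*} [NormedAddCommGroup X] [NormedSpace ℝ X]

lemma hasFDerivAt_mul_add_const (ε : ℝ) (q : ℂ × ℂ × X) :
    HasFDerivAt (fun p : ℂ × ℂ × X => p.1 * p.2.1 + (ε : ℂ))
      (q.2.1 • ContinuousLinearMap.fst ℝ ℂ (ℂ × X) +
        q.1 • (ContinuousLinearMap.fst ℝ ℂ X).comp (ContinuousLinearMap.snd ℝ ℂ (ℂ × X))) q := by
  have h := ((hasFDerivAt_fst (𝕜 := ℝ) (p := q)).mul
    (hasFDerivAt_snd (𝕜 := ℝ) (p := q)).fst).add_const (ε : ℂ)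
  convert! h using 1
  ext <;> simp

lemma fderiv_sub_log_normSq_apply {g : ℂ × ℂ × X → ℝ} (hg : ContDiff ℝ (⊤ : ℕ∞) g) {ε : ℝ}
    {q : ℂ × ℂ × X} (hq : q.1 * q.2.1 + (ε : ℂ) ≠ 0) (v : ℂ × ℂ × X) :
    fderiv ℝ (fun p : ℂ × ℂ × X =>
      g p - Real.log (Complex.normSq (p.1 * p.2.1 + (ε : ℂ)))) q v =
      fderiv ℝ g q v -
        2 * ((q.2.1 * v.1 + q.1 * v.2.1) * (q.1 * q.2.1 + (ε : ℂ))⁻¹).re := by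
  have h1 := ((hg.differentiable (by simp)) q).hasFDerivAt
  have h2 := (hasFDerivAt_log_normSq hq).comp q (hasFDerivAt_mul_add_const ε q)
  have h3 : HasFDerivAt (fun p : ℂ × ℂ × X =>
    g p - Real.log (Complex.normSq (p.1 * p.2.1 + (ε : ℂ)))) _ q := h1.sub h2
  rw [h3.fderiv]
  simp
  ring

lemma contDiffAt_sub_log_normSq {g : ℂ × ℂ × X → ℝ} (hg : ContDiff ℝ (⊤ : ℕ∞) g) {ε : ℝ}
    {q : ℂ × ℂ × X} (hq : q.1 * q.2.1 + (ε : ℂ) ≠ 0) :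
    ContDiffAt ℝ (⊤ : ℕ∞) (fun p : ℂ × ℂ × X =>
      g p - Real.log (Complex.normSq (p.1 * p.2.1 + (ε : ℂ)))) q := by
  simp only [Complex.normSq_eq_norm_sq]
  have h : ContDiff ℝ (⊤ : ℕ∞) (fun p : ℂ × ℂ × X => ‖p.1 * p.2.1 + (ε : ℂ)‖ ^ 2) :=
    ContDiff.norm_sq ℝ (by fun_prop)
  exact hg.contDiffAt.sub (h.contDiffAt.log (by simpa using hq))

lemma fderiv_fderiv_sub_log_normSq_apply_self {g : ℂ × ℂ × X → ℝ}
    (hg : ContDiff ℝ (⊤ : ℕ∞) g) {ε : ℝ} {q : ℂ × ℂ × X}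
    (hq : q.1 * q.2.1 + (ε : ℂ) ≠ 0) (v : ℂ × ℂ × X) :
    fderiv ℝ (fderiv ℝ (fun p : ℂ × ℂ × X =>
      g p - Real.log (Complex.normSq (p.1 * p.2.1 + (ε : ℂ))))) q v v =
      fderiv ℝ (fderiv ℝ g) q v v - 4 * (v.1 * v.2.1 * (q.1 * q.2.1 + (ε : ℂ))⁻¹).re +
        2 * (((q.2.1 * v.1 + q.1 * v.2.1) * (q.1 * q.2.1 + (ε : ℂ))⁻¹) ^ 2).re := by
  set φ : ℂ × ℂ × X → ℝ := fun p => g p - Real.log (Complex.normSq (p.1 * p.2.1 + (ε : ℂ)))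
  have hφ : DifferentiableAt ℝ (fderiv ℝ φ) q :=
    ((contDiffAt_sub_log_normSq hg hq).fderiv_right (m := 1) (by norm_cast)).differentiableAt
      one_ne_zero
  have hdg : DifferentiableAt ℝ (fderiv ℝ g) q :=
    (hg.contDiffAt.fderiv_right (m := 1) (by norm_cast)).differentiableAt one_ne_zero
  have hw := hasFDerivAt_mul_add_const ε q
  have hopen : ∀ᶠ y : ℂ × ℂ × X in 𝓝 q, y.1 * y.2.1 + (ε : ℂ) ≠ 0 :=
    hw.continuousAt.eventually_ne hq
  have hinv := (hasDerivAt_inv hq).comp_hasFDerivAt q hw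
  have hnum : HasFDerivAt (fun y : ℂ × ℂ × X => y.2.1 * v.1 + y.1 * v.2.1)
      (v.1 • (ContinuousLinearMap.fst ℝ ℂ X).comp (ContinuousLinearMap.snd ℝ ℂ (ℂ × X)) +
        v.2.1 • ContinuousLinearMap.fst ℝ ℂ (ℂ × X)) q :=
    ((hasFDerivAt_snd (𝕜 := ℝ) (p := q)).fst.mul_const v.1).add
      ((hasFDerivAt_fst (𝕜 := ℝ) (p := q)).mul_const v.2.1)
  have hterm := (Complex.reCLM.hasFDerivAt.comp q (hnum.mul hinv)).const_mul 2
  have hrhs := (hdg.hasFDerivAt.clm_apply (hasFDerivAt_const v q)).sub hterm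
  have hlhs := (hφ.hasFDerivAt.clm_apply (hasFDerivAt_const v q)).congr_of_eventuallyEq
    (f₁ := fun y => fderiv ℝ g y v -
      2 * ((y.2.1 * v.1 + y.1 * v.2.1) * (y.1 * y.2.1 + (ε : ℂ))⁻¹).re)
    (by
      filter_upwards [hopen] with y hy
      exact (fderiv_sub_log_normSq_apply hg hy v).symm)
  have h := DFunLike.congr_fun (hlhs.unique hrhs) v
  have hre : ∀ w : ℂ, (((q.2.1 * v.1 + q.1 * v.2.1) *
      (-(w ^ 2)⁻¹ * (q.2.1 * v.1 + q.1 * v.2.1)) + w⁻¹ * (v.1 * v.2.1 + v.2.1 * v.1))).re =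
      2 * (v.1 * v.2.1 * w⁻¹).re - (((q.2.1 * v.1 + q.1 * v.2.1) * w⁻¹) ^ 2).re := by
    intro w
    rw [show ((q.2.1 * v.1 + q.1 * v.2.1) *
      (-(w ^ 2)⁻¹ * (q.2.1 * v.1 + q.1 * v.2.1)) + w⁻¹ * (v.1 * v.2.1 + v.2.1 * v.1)) =
      (2 : ℝ) * (v.1 * v.2.1 * w⁻¹) - ((q.2.1 * v.1 + q.1 * v.2.1) * w⁻¹) ^ 2 by
        push_cast
        ring, Complex.sub_re, Complex.re_ofReal_mul]
  have hr := hre (q.1 * q.2.1 + (ε : ℂ))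
  simp only [ContinuousLinearMap.comp_zero, zero_add, ContinuousLinearMap.flip_apply, sub_apply,
    smul_apply, ContinuousLinearMap.comp_apply, add_apply, Complex.reCLM_apply, smul_eq_mul,
    ContinuousLinearMap.coe_fst', ContinuousLinearMap.coe_snd', Function.comp_apply, hr] at h
  rw [h]
  ring

lemma fderiv_sub_log_normSq_eq_zero_iff {g : ℂ × ℂ × X → ℝ} (hg : ContDiff ℝ (⊤ : ℕ∞) g)
    {ε : ℝ} {q : ℂ × ℂ × X} (hq : q.1 * q.2.1 + (ε : ℂ) ≠ 0) :
    fderiv ℝ (fun p : ℂ × ℂ × X =>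
      g p - Real.log (Complex.normSq (p.1 * p.2.1 + (ε : ℂ)))) q = 0 ↔
      q.2.1 = wirtingerCoeff ((fderiv ℝ g q).comp (.inl ℝ ℂ (ℂ × X))) *
          (q.1 * q.2.1 + (ε : ℂ)) ∧
        q.1 = wirtingerCoeff
          ((fderiv ℝ g q).comp ((ContinuousLinearMap.inr ℝ ℂ (ℂ × X)).comp (.inl ℝ ℂ X))) *
          (q.1 * q.2.1 + (ε : ℂ)) ∧
        (fderiv ℝ g q).comp ((ContinuousLinearMap.inr ℝ ℂ (ℂ × X)).comp (.inr ℝ ℂ X)) = 0 := by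
  have happ := fderiv_sub_log_normSq_apply hg hq
  rw [← div_eq_iff hq, ← div_eq_iff hq, ← apply_eq_two_mul_re_iff, ← apply_eq_two_mul_re_iff]
  constructor
  · intro h
    simp only [h, zero_apply] at happ
    refine ⟨fun z => ?_, fun z => ?_, ?_⟩
    · have := happ (z, 0, 0)
      simp only [mul_zero, add_zero] at this
      simp only [ContinuousLinearMap.comp_apply, ContinuousLinearMap.inl_apply, div_mul_eq_mul_div,
        div_eq_mul_inv (_ * _)]
      exact (sub_eq_zero.1 this.symm)
    · have := happ (0, z, 0)
      simp only [mul_zero, zero_add] at this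
      simp only [ContinuousLinearMap.comp_apply, ContinuousLinearMap.inl_apply,
        ContinuousLinearMap.inr_apply, div_mul_eq_mul_div, div_eq_mul_inv (_ * _)]
      exact (sub_eq_zero.1 this.symm)
    · ext ξ
      have := happ (0, 0, ξ)
      simpa using this.symm
  · rintro ⟨h1, h2, h3⟩
    refine ContinuousLinearMap.ext fun ⟨z, z', ξ⟩ => ?_
    have e1 : fderiv ℝ g q (z, 0, 0) = _ := h1 z
    have e2 : fderiv ℝ g q (0, z', 0) = _ := h2 z'
    have e3 : fderiv ℝ g q (0, 0, ξ) = 0 := DFunLike.congr_fun h3 ξ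
    have hsplit : ((z, z', ξ) : ℂ × ℂ × X) = (z, 0, 0) + (0, z', 0) + (0, 0, ξ) := by simp
    rw [happ, hsplit, map_add, map_add, e1, e2, e3]
    simp [add_mul, div_eq_mul_inv, mul_right_comm]
    ring

end LogPotential

/-- A form that differs from `H` by `- 4 re (v₀ v₁ / w) + 2 re ((α v₀ + β v₁) ^ 2)`, with `w` small,
is nondegenerate, and its index exceeds that of the restriction of `H` to `0 × 0 × X` by two. -/
lemma isGreatest_negDefiniteDims_of_apply_self {X : Type*} [NormedAddCommGroup X]
    [NormedSpace ℝ X] [FiniteDimensional ℝ X]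
    (Q H : (ℂ × ℂ × X) →L[ℝ] (ℂ × ℂ × X) →L[ℝ] ℝ) (hsymm : ∀ v w, Q v w = Q w v)
    {α β w : ℂ} {C M c : ℝ}
    (hQ : ∀ v, Q v v = H v v - 4 * (v.1 * v.2.1 * w⁻¹).re +
      2 * ((α * v.1 + β * v.2.1) ^ 2).re)
    (hw : w ≠ 0) (hC : ‖H‖ ≤ C) (hα : ‖α‖ ≤ M) (hβ : ‖β‖ ≤ M) (hc : 0 < c)
    (hsmall : C ^ 2 < c * (4 / ‖w‖ - 8 * M ^ 2 - C)) (N P : Submodule ℝ X)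
    (hdim : Module.finrank ℝ N + Module.finrank ℝ P = Module.finrank ℝ X)
    (hN : ∀ ξ ∈ N, c * ‖ξ‖ ^ 2 ≤ -H (0, 0, ξ) (0, 0, ξ))
    (hP : ∀ ξ ∈ P, c * ‖ξ‖ ^ 2 ≤ H (0, 0, ξ) (0, 0, ξ)) :
    (∀ v, v ≠ 0 → Q v ≠ 0) ∧
      IsGreatest (negDefiniteDims (ℂ × ℂ × X) Q) (Module.finrank ℝ N + 2) := by
  have hwpos : 0 < ‖w‖ := norm_pos_iff.2 hw
  have hcast : (‖w‖ : ℂ) ≠ 0 := by simpa using hw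
  have hu : ‖w / (‖w‖ : ℂ)‖ = 1 := by simp [hw]
  have hsq : ∀ v : ℂ × ℂ × X, ‖v.2.1‖ = ‖v.1‖ →
      |2 * ((α * v.1 + β * v.2.1) ^ 2).re| ≤ 8 * M ^ 2 * ‖v.1‖ ^ 2 := by
    intro v hv
    have h1 : ‖α * v.1 + β * v.2.1‖ ≤ 2 * M * ‖v.1‖ := by
      calc ‖α * v.1 + β * v.2.1‖ ≤ ‖α‖ * ‖v.1‖ + ‖β‖ * ‖v.1‖ := by
            simpa [hv] using norm_add_le (α * v.1) (β * v.2.1)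
        _ ≤ M * ‖v.1‖ + M * ‖v.1‖ := by gcongr
        _ = 2 * M * ‖v.1‖ := by ring
    have h2 := Complex.abs_re_le_norm ((α * v.1 + β * v.2.1) ^ 2)
    rw [norm_pow] at h2
    have h3 := pow_le_pow_left₀ (norm_nonneg _) h1 2
    rw [abs_mul, abs_two]
    nlinarith
  have hre : ∀ (s : ℝ) (v : ℂ × ℂ × X),
      v.2.1 = (s : ℂ) * (w / (‖w‖ : ℂ)) * (starRingEnd ℂ) v.1 →
      4 * (v.1 * v.2.1 * w⁻¹).re = s * (4 / ‖w‖) * ‖v.1‖ ^ 2 := by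
    intro s v hv
    have : v.1 * v.2.1 * w⁻¹ = ((s * ‖v.1‖ ^ 2 / ‖w‖ : ℝ) : ℂ) := by
      rw [hv]
      push_cast
      rw [← Complex.mul_conj']
      field_simp
    rw [this, Complex.ofReal_re]
    ring
  have hnorm : ∀ (s : ℝ) (v : ℂ × ℂ × X), |s| = 1 →
      v.2.1 = (s : ℂ) * (w / (‖w‖ : ℂ)) * (starRingEnd ℂ) v.1 → ‖v.2.1‖ = ‖v.1‖ := by
    intro s v hs hv
    rw [hv, norm_mul, norm_mul, hu, Complex.norm_real, Real.norm_eq_abs, hs, RCLike.norm_conj]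
    ring
  have hfinrank : Module.finrank ℝ (ℂ × ℂ × X) = Module.finrank ℝ X + 4 := by
    simp only [Module.finrank_prod, Complex.finrank_real_complex]
    ring
  have key := nondegenerate_and_isGreatest_negDefiniteDims Q hsymm
    (conjGraph (((1 : ℝ) : ℂ) * (w / (‖w‖ : ℂ))) N)
    (conjGraph (((-1 : ℝ) : ℂ) * (w / (‖w‖ : ℂ))) P)
    (by rw [finrank_conjGraph, finrank_conjGraph, hfinrank]; omega)
    (by
      rintro v ⟨hv, hvN⟩ hv0
      have hn := hnorm 1 v (by simp) hv
      have h1 := pos_add_mul_norm_sq (-H) ((norm_neg H).trans_le hC) hc hsmall hv0 hn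
        (by simpa using hN _ hvN)
      have h2 := (abs_le.1 (hsq v hn)).2
      have h3 := hre 1 v hv
      rw [neg_apply, neg_apply] at h1
      rw [hQ]
      nlinarith)
    (by
      rintro v ⟨hv, hvP⟩ hv0
      have hn := hnorm (-1) v (by simp) hv
      have h1 := pos_add_mul_norm_sq H hC hc hsmall hv0 hn (hP _ hvP)
      have h2 := (abs_le.1 (hsq v hn)).1
      have h3 := hre (-1) v hv
      rw [hQ]
      nlinarith)
  rwa [finrank_conjGraph] at key

/-- The index formula over an arbitrary finite-dimensional space of parameters. -/
lemma exists_critical_point_index_add_two {X : Type*} [NormedAddCommGroup X] [NormedSpace ℝ X]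
    [FiniteDimensional ℝ X] (g : ℂ × ℂ × X → ℝ) (hg : ContDiff ℝ (⊤ : ℕ∞) g)
    (x₀ : X) (m : ℕ)
    (hcrit : fderiv ℝ (fun y : X => g ((0 : ℂ), (0 : ℂ), y)) x₀ = 0)
    (hnd : ∀ v : X, v ≠ 0 →
      fderiv ℝ (fderiv ℝ (fun y : X => g ((0 : ℂ), (0 : ℂ), y))) x₀ v ≠ 0)
    (hm : IsGreatest (negDefiniteDims X
      (fderiv ℝ (fderiv ℝ (fun y : X => g ((0 : ℂ), (0 : ℂ), y))) x₀)) m) :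
    ∃ ε₁ > (0 : ℝ), ∃ U : Set (ℂ × ℂ × X), IsOpen U ∧
      ((0 : ℂ), (0 : ℂ), x₀) ∈ U ∧
      ∀ ε : ℝ, 0 < ε → ε < ε₁ →
        ∃ pε : ℂ × ℂ × X,
          pε ∈ U ∧ pε.1 * pε.2.1 + (ε : ℂ) ≠ 0 ∧
          fderiv ℝ (fun p : ℂ × ℂ × X =>
            g p - Real.log (Complex.normSq (p.1 * p.2.1 + (ε : ℂ)))) pε = 0 ∧
          (∀ q ∈ U, q.1 * q.2.1 + (ε : ℂ) ≠ 0 →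
            fderiv ℝ (fun p : ℂ × ℂ × X =>
              g p - Real.log (Complex.normSq (p.1 * p.2.1 + (ε : ℂ)))) q = 0 →
            q = pε) ∧
          (∀ v : ℂ × ℂ × X, v ≠ 0 →
            fderiv ℝ (fderiv ℝ (fun p : ℂ × ℂ × X =>
              g p - Real.log (Complex.normSq (p.1 * p.2.1 + (ε : ℂ))))) pε v ≠ 0) ∧
          IsGreatest (negDefiniteDims (ℂ × ℂ × X)
            (fderiv ℝ (fderiv ℝ (fun p : ℂ × ℂ × X =>
              g p - Real.log (Complex.normSq (p.1 * p.2.1 + (ε : ℂ))))) pε)) (m + 2) := by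
  set p : ℂ × ℂ × X := (0, 0, x₀) with hp
  set r : X → ℝ := fun y => g ((0 : ℂ), (0 : ℂ), y) with hr
  let J : X →L[ℝ] ℂ × ℂ × X := (ContinuousLinearMap.inr ℝ ℂ (ℂ × X)).comp (.inr ℝ ℂ X)
  let a : ℂ × ℂ × X → ℂ := fun q => wirtingerCoeff ((fderiv ℝ g q).comp (.inl ℝ ℂ (ℂ × X)))
  let b : ℂ × ℂ × X → ℂ := fun q => wirtingerCoeff
    ((fderiv ℝ g q).comp ((ContinuousLinearMap.inr ℝ ℂ (ℂ × X)).comp (.inl ℝ ℂ X)))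
  let G : ℂ × ℂ × X → X →L[ℝ] ℝ := fun q => (fderiv ℝ g q).comp J
  have hdg : ContDiff ℝ 1 (fderiv ℝ g) := hg.fderiv_right (m := 1) (by norm_cast)
  have ha : ContDiff ℝ 1 a := contDiff_wirtingerCoeff (hdg.clm_comp contDiff_const)
  have hb : ContDiff ℝ 1 b := contDiff_wirtingerCoeff (hdg.clm_comp contDiff_const)
  have hG : ContDiff ℝ 1 G := hdg.clm_comp contDiff_const
  have hJ : ∀ y, J y = (0, 0, y) := fun y => rfl
  have hdr : fderiv ℝ r = fun y => G (J y) := by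
    funext y
    exact (((hg.differentiable (by simp)) (J y)).hasFDerivAt.comp y J.hasFDerivAt).fderiv
  have hGderiv : ∀ q v ξ, fderiv ℝ G q v ξ = fderiv ℝ (fderiv ℝ g) q v (J ξ) := by
    intro q v ξ
    have h := ((hdg.differentiable one_ne_zero) q).hasFDerivAt.clm_comp (hasFDerivAt_const J q)
    have h' : HasFDerivAt G _ q := h
    rw [h'.fderiv]
    simp
  have hddr : ∀ ξ, fderiv ℝ (fderiv ℝ r) x₀ ξ = fderiv ℝ G p (J ξ) := by
    intro ξ
    rw [hdr]
    have h : HasFDerivAt (fun y => G (J y)) _ x₀ :=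
      ((hG.differentiable one_ne_zero) (J x₀)).hasFDerivAt.comp x₀ J.hasFDerivAt
    rw [h.fderiv]
    rfl
  obtain ⟨U, hU, hpU, ψ, hψ, hev⟩ := exists_implicit_zero (x₀ := x₀)
    ((Subspace.dual_finrank_eq (K := ℝ) (V := X)).symm.trans
      (LinearMap.toContinuousLinearMap (𝕜 := ℝ) (E := X) (F' := ℝ)).finrank_eq)
    ha hb hG (by rw [← hcrit, hdr]; rfl) (fun ξ hξ => by
      have := hnd ξ hξ
      rwa [hddr] at this)
  have hrC : ContDiff ℝ (⊤ : ℕ∞) r := hg.comp J.contDiff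
  have hrsymm : ∀ v w, fderiv ℝ (fderiv ℝ r) x₀ v w = fderiv ℝ (fderiv ℝ r) x₀ w v :=
    hrC.contDiffAt.isSymmSndFDerivAt (by simp; norm_cast)
  obtain ⟨N, P, hNm, hdim, hN, hP⟩ := exists_posDefinite_complement _ hrsymm hnd hm
  set H : ℂ × ℂ × X → (ℂ × ℂ × X) →L[ℝ] (ℂ × ℂ × X) →L[ℝ] ℝ := fderiv ℝ (fderiv ℝ g)
  let B : ℂ × ℂ × X → X →L[ℝ] X →L[ℝ] ℝ := fun q => (fderiv ℝ G q).comp J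
  have hBH : ∀ q ξ, B q ξ ξ = H q (0, 0, ξ) (0, 0, ξ) := fun q ξ => hGderiv q (J ξ) ξ
  have hBp : fderiv ℝ (fderiv ℝ r) x₀ = B p := ContinuousLinearMap.ext hddr
  rw [hBp] at hN hP
  obtain ⟨c, hc, hNP⟩ := eventually_coercive_of_definiteOn (B := B)
    (tendsto_norm_fderiv_comp_sub hG J p) hN hP
  let C := ‖H p‖ + 1
  let M := max ‖a p‖ ‖b p‖ + 1
  let w : ℝ → ℂ := fun ε => (ψ ε).1 * (ψ ε).2.1 + (ε : ℂ)
  have hwlim : Tendsto w (𝓝 0) (𝓝 0) := by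
    have h1 := ((continuous_fst.tendsto p).comp hψ).mul
      (((continuous_fst.comp continuous_snd).tendsto p).comp hψ)
    have h := h1.add (Complex.continuous_ofReal.tendsto 0)
    simpa [hp] using h
  let δ := 4 / (C ^ 2 / c + 8 * M ^ 2 + C + 1)
  have hδ : 0 < δ := by positivity
  have hHbd : ∀ᶠ ε in 𝓝 0, ‖H (ψ ε)‖ < C := hψ.eventually (eventually_norm_fderiv_lt hdg p)
  have habd : ∀ᶠ ε in 𝓝 0, ‖a (ψ ε)‖ < M :=
    ((ha.continuous.tendsto p).comp hψ).norm.eventually_lt_const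
      ((le_max_left _ _).trans_lt (lt_add_one _))
  have hbbd : ∀ᶠ ε in 𝓝 0, ‖b (ψ ε)‖ < M :=
    ((hb.continuous.tendsto p).comp hψ).norm.eventually_lt_const
      ((le_max_right _ _).trans_lt (lt_add_one _))
  have hwbd : ∀ᶠ ε in 𝓝 0, ‖w ε‖ < δ := hwlim.norm.eventually_lt_const (by simpa using hδ)
  obtain ⟨ε₁, hε₁, hall⟩ := Metric.eventually_nhds_iff.1
    (hev.and ((hψ.eventually hNP).and (hHbd.and (habd.and (hbbd.and hwbd)))))
  refine ⟨ε₁, hε₁, U, hU, hpU, fun ε hε hεlt => ?_⟩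
  obtain ⟨⟨hψU, huniq⟩, ⟨hNε, hPε⟩, hHC, haM, hbM, hwδ⟩ :=
    hall (y := ε) (by simpa [abs_of_pos hε] using hεlt)
  obtain ⟨hza, hzb, hzG⟩ := (huniq _ hψU).2 rfl
  have hw0 : (ψ ε).1 * (ψ ε).2.1 + (ε : ℂ) ≠ 0 := by
    intro h
    rw [h, mul_zero] at hza hzb
    rw [hza, hzb] at h
    simp [hε.ne'] at h
  refine ⟨ψ ε, hψU, hw0, (fderiv_sub_log_normSq_eq_zero_iff hg hw0).2 ⟨hza, hzb, hzG⟩,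
    fun q hq hqw hq0 => (huniq q hq).1 ((fderiv_sub_log_normSq_eq_zero_iff hg hqw).1 hq0), ?_⟩
  rw [← hNm]
  refine isGreatest_negDefiniteDims_of_apply_self _ (H (ψ ε))
    ((contDiffAt_sub_log_normSq hg hw0).isSymmSndFDerivAt (by simp; norm_cast))
    (α := a (ψ ε)) (β := b (ψ ε)) (w := w ε) (C := C) (M := M) (c := c) (fun v => ?_) hw0
    hHC.le haM.le hbM.le hc ?_ N P hdim (fun ξ hξ => ?_) (fun ξ hξ => ?_)
  · have hab : ((ψ ε).2.1 * v.1 + (ψ ε).1 * v.2.1) * ((ψ ε).1 * (ψ ε).2.1 + (ε : ℂ))⁻¹ =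
        a (ψ ε) * v.1 + b (ψ ε) * v.2.1 := by
      rw [← (div_eq_iff hw0).2 hza, ← (div_eq_iff hw0).2 hzb]
      ring
    rw [fderiv_fderiv_sub_log_normSq_apply_self hg hw0, hab]
  · have hwpos : 0 < ‖w ε‖ := norm_pos_iff.2 hw0
    have hlt : C ^ 2 / c + 8 * M ^ 2 + C + 1 < 4 / ‖w ε‖ := by
      rw [lt_div_iff₀ hwpos, mul_comm]
      exact (lt_div_iff₀ (by positivity)).1 hwδ
    rw [← div_lt_iff₀' hc]
    linarith
  · rw [← hBH]
    exact hNε ξ hξ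
  · rw [← hBH]
    exact hPε ξ hξ

/-- Index formula of Theorem 1 in the local model: the unique critical point
`p_ε` of `φ_ε = g - log|z₀z₁ + ε|²` near a nondegenerate critical point `x₀` of
`x ↦ g(0,0,x)` of Morse index `m` is nondegenerate of Morse index `m + 2`. -/
theorem critical_point_index_shift
    (k : ℕ) (g : ℂ × ℂ × EuclideanSpace ℝ (Fin k) → ℝ) (hg : ContDiff ℝ (⊤ : ℕ∞) g)
    (x₀ : EuclideanSpace ℝ (Fin k)) (m : ℕ)
    (hcrit : fderiv ℝ (fun y : EuclideanSpace ℝ (Fin k) => g ((0 : ℂ), (0 : ℂ), y)) x₀ = 0)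
    (hnd : ∀ v : EuclideanSpace ℝ (Fin k), v ≠ 0 →
      fderiv ℝ (fderiv ℝ (fun y : EuclideanSpace ℝ (Fin k) => g ((0 : ℂ), (0 : ℂ), y))) x₀ v ≠ 0)
    (hm : IsGreatest (negDefiniteDims (EuclideanSpace ℝ (Fin k))
      (fderiv ℝ (fderiv ℝ (fun y : EuclideanSpace ℝ (Fin k) => g ((0 : ℂ), (0 : ℂ), y))) x₀)) m) :
    ∃ ε₁ > (0 : ℝ), ∃ U : Set (ℂ × ℂ × EuclideanSpace ℝ (Fin k)), IsOpen U ∧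
      ((0 : ℂ), (0 : ℂ), x₀) ∈ U ∧
      ∀ ε : ℝ, 0 < ε → ε < ε₁ →
        ∃ pε : ℂ × ℂ × EuclideanSpace ℝ (Fin k),
          pε ∈ U ∧ pε.1 * pε.2.1 + (ε : ℂ) ≠ 0 ∧
          fderiv ℝ (fun p : ℂ × ℂ × EuclideanSpace ℝ (Fin k) =>
            g p - Real.log (Complex.normSq (p.1 * p.2.1 + (ε : ℂ)))) pε = 0 ∧
          (∀ q ∈ U, q.1 * q.2.1 + (ε : ℂ) ≠ 0 →
            fderiv ℝ (fun p : ℂ × ℂ × EuclideanSpace ℝ (Fin k) =>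
              g p - Real.log (Complex.normSq (p.1 * p.2.1 + (ε : ℂ)))) q = 0 →
            q = pε) ∧
          (∀ v : ℂ × ℂ × EuclideanSpace ℝ (Fin k), v ≠ 0 →
            fderiv ℝ (fderiv ℝ (fun p : ℂ × ℂ × EuclideanSpace ℝ (Fin k) =>
              g p - Real.log (Complex.normSq (p.1 * p.2.1 + (ε : ℂ))))) pε v ≠ 0) ∧
          IsGreatest (negDefiniteDims (ℂ × ℂ × EuclideanSpace ℝ (Fin k))
            (fderiv ℝ (fderiv ℝ (fun p : ℂ × ℂ × EuclideanSpace ℝ (Fin k) =>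
              g p - Real.log (Complex.normSq (p.1 * p.2.1 + (ε : ℂ))))) pε)) (m + 2) := by
  exact exists_critical_point_index_add_two g hg x₀ m hcrit hnd hm
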